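/- Let α > 0, β > 0, c_fast ≥ 0, c_slow ≥ 0, ε > 0 be real numbers, and let y_slow, y_fast be real numbers satisfying y_slow ≤ y_fast ≤ (1 + ε)·y_slow. If the model selection threshold condition fails, i.e. ε²·y_fast²/(1 + ε)² ≤ (β/α)·c_slow, then choosing the fast model is at least as good as choosing the slow model when the slow model's output is the ground truth: −α·(y_fast − y_slow)² − β·c_fast ≥ −β·(c_fast + c_slow). -/

import Mathlib

/-- For coreset-compressed linear regression, if the selection
threshold condition fails, i.e. `ε²·y_fast²/(1+ε)² ≤ (β/α)·c_slow`, then keeping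
the fast model is at least as good as invoking the slow model (whose output is
the ground truth). -/
theorem stmt_5 (α β c_fast c_slow ε y_slow y_fast : ℝ)
    (hα : 0 < α) (hβ : 0 < β) (hcf : 0 ≤ c_fast) (hcs : 0 ≤ c_slow) (hε : 0 < ε)
    (h₁ : y_slow ≤ y_fast) (h₂ : y_fast ≤ (1 + ε) * y_slow)
    (hthr : ε ^ 2 * y_fast ^ 2 / (1 + ε) ^ 2 ≤ (β / α) * c_slow) :
    -α * (y_fast - y_slow) ^ 2 - β * c_fast ≥ -β * (c_fast + c_slow) := by
  have h1 : 0 < 1 + ε := by linarith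
  have h3 : y_fast - y_slow ≤ ε * y_fast / (1 + ε) := by
    rw [le_div_iff₀ h1]
    nlinarith
  have h4 : (y_fast - y_slow) ^ 2 ≤ (ε * y_fast / (1 + ε)) ^ 2 :=
    pow_le_pow_left₀ (by linarith) h3 2
  have h5 : (y_fast - y_slow) ^ 2 ≤ (β / α) * c_slow := by
    rw [div_pow, mul_pow] at h4
    exact h4.trans hthr
  have h6 := mul_le_mul_of_nonneg_left h5 hα.le
  have h7 : α * (β / α * c_slow) = β * c_slow := by field_simp
  rw [h7] at h6
  linarith
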